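/- Let f(x) = Σ_{i=0}^{3} a_i x^{q^i} and g(x) = Σ_{i=0}^{3} b_i x^{q^i} be q-polynomials over F_{q^4} with D_f = D_g, and suppose f is not F_{q^2}-linear (equivalently, a_1 ≠ 0 or a_3 ≠ 0), i.e. the maximum field of linearity of f is F_q. Then there exists λ ∈ F_{q^4}, λ ≠ 0, such that either g(x) = f(λx)/λ for all x ∈ F_{q^4}, or g(x) = f̂(λx)/λ for all x ∈ F_{q^4}. -/

import Mathlib

/-!
For an additive map `f` of a finite field `F`, each fibre of `x ↦ f x / x` on the nonzero elements
is a nonzero additive subgroup with `0` removed, so its size is `-1` in `F`. Hence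
`∑ x ≠ 0, w (f x / x)` depends only on the direction set `D_f`, whatever the function `w` is. Take
for `w` a product of distinct powers of the Frobenius `φ : x ↦ x ^ q` and expand: by the
orthogonality of the characters of `Fˣ`, and the uniqueness of cyclic base `q` expansions, what
remains is, up to sign, a principal permanent of the Dickson matrix of `f`.

The adjoint of `f` corresponds to the transposed matrix and so has the same principal permanents.
In dimension four, those of order two and three, and in a degenerate case that of order four, give
the sum and the product of two quantities interchanged by the adjoint. They thus determine the
coefficients of `f`, up to replacing `f` by its adjoint, up to factors of norm one, which Hilbert's
Theorem 90 turns into a substitution `x ↦ l * x`.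
-/

section CyclicCarries

open Fin.NatCast in
theorem forall_fin_of_forall_add_one {n : ℕ} [NeZero n] {P : Fin n → Prop} {a : Fin n} (ha : P a)
    (hP : ∀ i, P i → P (i + 1)) (i : Fin n) : P i := by
  have h : ∀ k : ℕ, P (a + k) := fun k ↦ by
    induction k with
    | zero => simpa using ha
    | succ k ih => simpa only [Nat.cast_succ, add_assoc] using hP _ ih
  simpa using h (i - a).val

theorem mul_sum_shift_mul_pow {R : Type*} [CommRing R] {n : ℕ} [NeZero n] (q : R) (d : Fin n → R)
    (m : Fin n) :
    q * ∑ i : Fin n, d (i + (m + 1)) * q ^ (i : ℕ) =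
      ∑ i : Fin n, d (i + m) * q ^ (i : ℕ) + d m * (q ^ n - 1) := by
  obtain ⟨k, rfl⟩ := Nat.exists_eq_succ_of_ne_zero (NeZero.ne n)
  rw [Fin.sum_univ_castSucc, Fin.sum_univ_succ]
  have hlast : Fin.last k + (m + 1) = m := by
    rw [add_comm m, ← add_assoc, Fin.last_add_one, zero_add]
  have hshift (i : Fin k) : i.castSucc + (m + 1) = i.succ + m := by
    rw [add_comm m, ← add_assoc, Fin.coeSucc_eq_succ]
  simp only [hlast, hshift, Fin.val_castSucc, Fin.val_last, Fin.val_succ, Fin.val_zero, zero_add,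
    pow_succ, mul_add, Finset.mul_sum]
  have hterm (i : Fin k) : q * (d (i.succ + m) * q ^ (i : ℕ)) =
      d (i.succ + m) * (q ^ (i : ℕ) * q) := by ring
  simp only [hterm]
  ring

theorem eq_zero_of_mul_shift_eq_add {n : ℕ} [NeZero n] {q : ℤ} (hq : 2 ≤ q) {d t : Fin n → ℤ}
    (hd : ∀ i, -1 ≤ d i) (hsum : ∑ i, d i = 0) (ht : ∀ i, q * t (i + 1) = t i + d i) : d = 0 := by
  have htsum : ∑ i, t i = 0 := by
    have h : q * ∑ i, t i = ∑ i, t i := by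
      calc q * ∑ i, t i = ∑ i, q * t (i + 1) := by
            rw [Finset.mul_sum]
            exact (Equiv.sum_comp (Equiv.addRight (1 : Fin n)) fun i ↦ q * t i).symm
        _ = ∑ i, t i := by simp only [ht, Finset.sum_add_distrib, hsum, add_zero]
    have : (q - 1) * ∑ i, t i = 0 := by linear_combination h
    exact (mul_eq_zero.mp this).resolve_left (by omega)
  have hnonneg_step (i : Fin n) (hi : 0 ≤ t i) : 0 ≤ t (i + 1) := by
    have := ht i
    have := hd i
    by_contra! hneg
    nlinarith
  obtain ⟨a, -, ha⟩ := Finset.exists_le_of_sum_le (f := fun _ ↦ (0 : ℤ)) Finset.univ_nonempty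
    (by rw [htsum, Finset.sum_const_zero])
  have hnonneg : ∀ i, 0 ≤ t i := forall_fin_of_forall_add_one ha hnonneg_step
  have ht0 : t = 0 := (Fintype.sum_eq_zero_iff_of_nonneg hnonneg).mp htsum
  funext i
  simpa [ht0] using (ht i).symm

-- A cyclic shift of `d` multiplies the sum by `q` modulo `q ^ n - 1`. The quotients `t m` of the
-- shifted sums by `q ^ n - 1` are the carries of this multiplication.
theorem eq_zero_of_pow_sub_one_dvd {n : ℕ} [NeZero n] {q : ℤ} (hq : 2 ≤ q) {d : Fin n → ℤ}
    (hd : ∀ i, -1 ≤ d i) (hsum : ∑ i, d i = 0)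
    (hdvd : q ^ n - 1 ∣ ∑ i, d i * q ^ (i : ℕ)) : d = 0 := by
  have hcop : IsCoprime (q ^ n - 1) q :=
    ⟨-1, q ^ (n - 1), by rw [pow_sub_one_mul (NeZero.ne n)]; ring⟩
  have hshift (m : Fin n) : q ^ n - 1 ∣ ∑ i : Fin n, d (i + m) * q ^ (i : ℕ) := by
    refine forall_fin_of_forall_add_one (a := 0)
      (P := fun m ↦ q ^ n - 1 ∣ ∑ i : Fin n, d (i + m) * q ^ (i : ℕ))
      (by simpa only [add_zero] using hdvd) (fun m hm ↦ ?_) m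
    refine hcop.dvd_of_dvd_mul_left ?_
    rw [mul_sum_shift_mul_pow]
    exact hm.add (dvd_mul_left _ _)
  choose t ht using hshift
  have hpos : 1 < q ^ n := one_lt_pow₀ (by omega) (NeZero.ne n)
  refine eq_zero_of_mul_shift_eq_add hq hd hsum (t := t) fun m ↦ ?_
  have h := mul_sum_shift_mul_pow q d m
  rw [ht, ht] at h
  exact mul_left_cancel₀ (sub_ne_zero.mpr hpos.ne') (by linear_combination h)

theorem card_fiber_le_one {ι κ : Type*} [Fintype ι] [DecidableEq κ] {r : ι → κ}
    (hr : Function.Injective r) (i : κ) : Finset.card {j | r j = i} ≤ 1 :=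
  Finset.card_le_one.mpr fun _ ha _ hb ↦
    hr ((Finset.mem_filter_univ _).mp ha |>.trans ((Finset.mem_filter_univ _).mp hb).symm)

theorem exists_perm_eq_comp_of_card_fiber_eq {ι κ : Type*} [Fintype ι] [DecidableEq κ]
    {k r : ι → κ} (hr : Function.Injective r)
    (h : ∀ i, Finset.card {j | k j = i} = Finset.card {j | r j = i}) :
    ∃ σ : Equiv.Perm ι, k = r ∘ σ := by
  have hk : Function.Injective k := fun a b hab ↦
    Finset.card_le_one.mp ((h (k b)).trans_le (card_fiber_le_one hr _)) a (by simpa using hab) b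
      (by simp)
  have hmem (j : ι) : ∃ j', r j' = k j := by
    have : 0 < Finset.card {j' | r j' = k j} := h (k j) ▸ Finset.card_pos.mpr ⟨j, by simp⟩
    simpa [Finset.Nonempty] using Finset.card_pos.mp this
  choose σ hσ using hmem
  have hσ_inj : Function.Injective σ := fun a b hab ↦ hk (by rw [← hσ, ← hσ, hab])
  exact ⟨.ofBijective σ (Finite.injective_iff_bijective.mp hσ_inj), funext fun j ↦ (hσ j).symm⟩

theorem exists_perm_eq_comp_of_pow_sub_one_dvd {n : ℕ} [NeZero n] {ι : Type*} [Fintype ι] {q : ℤ}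
    (hq : 2 ≤ q) {k r : ι → Fin n} (hr : Function.Injective r)
    (hdvd : q ^ n - 1 ∣ ∑ j, q ^ (k j : ℕ) - ∑ j, q ^ (r j : ℕ)) :
    ∃ σ : Equiv.Perm ι, k = r ∘ σ := by
  have hsum (s : ι → Fin n) (w : Fin n → ℤ) :
      ∑ i, (Finset.card {j | s j = i} : ℤ) * w i = ∑ j, w (s j) := by
    simpa using Finset.sum_fiberwise' Finset.univ s w
  have hdiff : (fun i ↦ (Finset.card {j | k j = i} : ℤ) - Finset.card {j | r j = i}) = 0 := by
    refine eq_zero_of_pow_sub_one_dvd hq (fun i ↦ ?_) ?_ ?_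
    · have := card_fiber_le_one hr i
      omega
    · have hcard (s : ι → Fin n) : ∑ i, (Finset.card {j | s j = i} : ℤ) = Fintype.card ι := by
        simpa using hsum s 1
      rw [Finset.sum_sub_distrib, hcard, hcard, sub_self]
    · simpa only [sub_mul, Finset.sum_sub_distrib, hsum _ fun i ↦ q ^ (i : ℕ)] using hdvd
  refine exists_perm_eq_comp_of_card_fiber_eq hr fun i ↦ ?_
  exact_mod_cast sub_eq_zero.mp (congrFun hdiff i)

end CyclicCarries

section FrobeniusPowers

theorem two_le_of_card_eq_pow {α : Type*} [Fintype α] [Nontrivial α] {q n : ℕ}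
    (h : Fintype.card α = q ^ n) : 2 ≤ q := by
  have hn : 1 < q ^ n := h ▸ Fintype.one_lt_card
  exact (Nat.one_lt_pow_iff (by rintro rfl; simp at hn)).mp hn

theorem pow_val_add {M : Type*} [Monoid M] {a : M} {n : ℕ} (h : a ^ n = 1) (i j : Fin n) :
    a ^ ((i + j : Fin n) : ℕ) = a ^ (i : ℕ) * a ^ (j : ℕ) := by
  rw [Fin.val_add, ← pow_eq_pow_mod _ h, pow_add]

variable {F : Type*} [Field F] {φ : F →+* F} {q n : ℕ}

theorem ringHom_pow_apply_eq_pow (hφ : ∀ x, φ x = x ^ q) (i : ℕ) (x : F) :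
    (φ ^ i) x = x ^ q ^ i := by
  induction i with
  | zero => simp
  | succ i ih => rw [pow_succ', RingHom.mul_def, RingHom.comp_apply, ih, hφ, ← pow_mul, pow_succ]

variable [Fintype F]

theorem exists_ringHom_eq_pow_of_card_eq_pow (hn : n ≠ 0) (hF : Fintype.card F = q ^ n) :
    ∃ φ : F →+* F, ∀ x, φ x = x ^ q := by
  obtain ⟨p, hchar, m, hp, hcard⟩ := FiniteField.card' F
  obtain ⟨e, -, rfl⟩ := (Nat.dvd_prime_pow hp).mp (hcard ▸ hF ▸ dvd_pow_self q hn)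
  have : Fact p.Prime := ⟨hp⟩
  exact ⟨iterateFrobenius F p e, iterateFrobenius_def p e⟩

theorem ringHom_pow_eq_one (hφ : ∀ x, φ x = x ^ q) (hF : Fintype.card F = q ^ n) : φ ^ n = 1 :=
  RingHom.ext fun x ↦ by rw [ringHom_pow_apply_eq_pow hφ, ← hF, FiniteField.pow_card]; rfl

variable [DecidableEq F]

theorem sum_units_zpow (m : ℤ) :
    ∑ x : Fˣ, ((x ^ m : Fˣ) : F) = if (Fintype.card F - 1 : ℤ) ∣ m then -1 else 0 := by
  have hcard : ((Fintype.card F - 1 : ℕ) : ℤ) = Fintype.card F - 1 := by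
    rw [Nat.cast_sub Fintype.card_pos, Nat.cast_one]
  have hpos : (0 : ℤ) < (Fintype.card F - 1 : ℕ) := by
    exact_mod_cast Nat.sub_pos_of_lt Fintype.one_lt_card
  obtain ⟨k, hk⟩ := Int.eq_ofNat_of_zero_le (Int.emod_nonneg m hpos.ne')
  have hzpow (x : Fˣ) : x ^ m = x ^ k := by
    rw [← zpow_mod_card, Fintype.card_units, hk, zpow_natCast]
  have hdvd : (Fintype.card F - 1 : ℤ) ∣ m ↔ Fintype.card F - 1 ∣ k := by
    rw [← hcard, ← Int.natCast_dvd_natCast, ← hk, dvd_iff_dvd_of_dvd_sub Int.dvd_self_sub_emod]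
  simp only [hzpow, hdvd, Units.val_pow_eq_pow_val, FiniteField.sum_pow_units]

variable {ι : Type*} [Fintype ι] [DecidableEq ι]

theorem sum_units_prod_pow_div_pow [NeZero n] (hφ : ∀ x, φ x = x ^ q)
    (hF : Fintype.card F = q ^ n) (k : ι → Fin n) {r : ι → Fin n} (hr : Function.Injective r) :
    ∑ x : Fˣ, ∏ j, (φ ^ (k j : ℕ)) (x : F) / (φ ^ (r j : ℕ)) (x : F) =
      if k ∈ Set.range fun σ : Equiv.Perm ι ↦ r ∘ σ then -1 else 0 := by
  have hq : (2 : ℤ) ≤ q := mod_cast two_le_of_card_eq_pow hF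
  have hchar (x : Fˣ) : ∏ j, (φ ^ (k j : ℕ)) (x : F) / (φ ^ (r j : ℕ)) (x : F) =
      ((x ^ (∑ j, (q : ℤ) ^ (k j : ℕ) - ∑ j, (q : ℤ) ^ (r j : ℕ)) : Fˣ) : F) := by
    simp only [ringHom_pow_apply_eq_pow hφ, Finset.prod_div_distrib, Finset.prod_pow_eq_pow_sum]
    rw [zpow_sub, ← div_eq_mul_inv, Units.val_div_eq_div_val]
    norm_cast
  have hdvd : ((q : ℤ) ^ n - 1 ∣ ∑ j, (q : ℤ) ^ (k j : ℕ) - ∑ j, (q : ℤ) ^ (r j : ℕ)) ↔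
      k ∈ Set.range fun σ : Equiv.Perm ι ↦ r ∘ σ := by
    refine ⟨fun h ↦ ?_, ?_⟩
    · obtain ⟨σ, rfl⟩ := exists_perm_eq_comp_of_pow_sub_one_dvd hq hr h
      exact ⟨σ, rfl⟩
    · rintro ⟨σ, rfl⟩
      simp only [Function.comp_apply, Equiv.sum_comp σ fun j ↦ (q : ℤ) ^ (r j : ℕ), sub_self,
        dvd_zero]
  simp only [hchar, sum_units_zpow, hF, Nat.cast_pow, hdvd]

theorem sum_units_prod_sum_mul_pow_div_pow [NeZero n] (hφ : ∀ x, φ x = x ^ q)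
    (hF : Fintype.card F = q ^ n) (M : Matrix ι (Fin n) F) {r : ι → Fin n}
    (hr : Function.Injective r) :
    ∑ x : Fˣ, ∏ j, (∑ i, M j i * (φ ^ (i : ℕ)) (x : F)) / (φ ^ (r j : ℕ)) (x : F) =
      -(M.submatrix id r).permanent := by
  have hexpand (x : Fˣ) :
      ∏ j, (∑ i, M j i * (φ ^ (i : ℕ)) (x : F)) / (φ ^ (r j : ℕ)) (x : F) =
        ∑ k : ι → Fin n, (∏ j, M j (k j)) *
          ∏ j, (φ ^ (k j : ℕ)) (x : F) / (φ ^ (r j : ℕ)) (x : F) := by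
    simp only [Finset.sum_div, Finset.prod_univ_sum, Fintype.piFinset_univ, mul_div_assoc,
      Finset.prod_mul_distrib]
  have hcomp : Function.Injective fun σ : Equiv.Perm ι ↦ r ∘ σ := fun σ τ h ↦
    Equiv.coe_fn_injective (hr.comp_left h)
  calc _ = ∑ k : ι → Fin n, (∏ j, M j (k j)) *
        if k ∈ Set.range fun σ : Equiv.Perm ι ↦ r ∘ σ then -1 else 0 := by
        simp only [hexpand]
        rw [Finset.sum_comm]
        simp only [← Finset.mul_sum, sum_units_prod_pow_div_pow hφ hF _ hr]
    _ = ∑ σ : Equiv.Perm ι, -∏ j, M j (r (σ j)) :=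
        (Fintype.sum_of_injective _ hcomp _ _ (fun k hk ↦ by rw [if_neg hk, mul_zero])
          fun σ ↦ by rw [if_pos ⟨σ, rfl⟩, mul_neg_one]; rfl).symm
    _ = -(M.submatrix id r).permanent := by
        rw [Finset.sum_neg_distrib, ← Matrix.permanent_transpose]
        rfl

end FrobeniusPowers

section Permanents

variable {R : Type*} [CommSemiring R]

theorem permanent_succ_column_zero {n : ℕ} (M : Matrix (Fin (n + 1)) (Fin (n + 1)) R) :
    M.permanent = ∑ i, M i 0 * (M.submatrix i.succAbove Fin.succ).permanent := by
  have hswap (i : Fin (n + 1)) : (M.submatrix i.succAbove Fin.succ).permanent =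
      (M.submatrix (fun j ↦ Equiv.swap 0 i (Fin.succ j)) Fin.succ).permanent := by
    cases i using Fin.cases with
    | zero => simp only [Equiv.swap_self, Equiv.refl_apply, Fin.succAbove_zero]
    | succ i =>
      simp only [← Fin.succAbove_cycleRange]
      exact (Matrix.permanent_permute_cols i.cycleRange _).symm
  rw [Matrix.permanent, ← Equiv.sum_comp Equiv.Perm.decomposeFin.symm, Fintype.sum_prod_type]
  refine Finset.sum_congr rfl fun i _ ↦ ?_
  rw [hswap]
  simp only [Matrix.permanent, Matrix.submatrix_apply, Finset.mul_sum, Fin.prod_univ_succ,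
    Equiv.Perm.decomposeFin_symm_apply_zero, Equiv.Perm.decomposeFin_symm_apply_succ]

theorem permanent_fin_two (M : Matrix (Fin 2) (Fin 2) R) :
    M.permanent = M 0 0 * M 1 1 + M 0 1 * M 1 0 := by
  simp [permanent_succ_column_zero, Fin.succAbove, mul_comm (M 1 0)]

theorem permanent_fin_three (M : Matrix (Fin 3) (Fin 3) R) :
    M.permanent = M 0 0 * M 1 1 * M 2 2 + M 0 0 * M 1 2 * M 2 1 + M 0 1 * M 1 0 * M 2 2 +
      M 0 1 * M 1 2 * M 2 0 + M 0 2 * M 1 0 * M 2 1 + M 0 2 * M 1 1 * M 2 0 := by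
  simp only [permanent_succ_column_zero, Nat.reduceAdd, Fin.isValue, Matrix.submatrix_apply,
    Fin.succAbove, Fin.succ_zero_eq_one, Matrix.submatrix_submatrix, Matrix.permanent_unique,
    Fin.default_eq_zero, Function.comp_apply, Fin.castSucc_zero, Fin.succ_one_eq_two,
    Fin.sum_univ_succ, lt_self_iff_false, ↓reduceIte, Fin.castSucc_one, Finset.univ_unique,
    Fin.castSucc_succ, Fin.succ_pos, Finset.sum_singleton, not_lt_zero, Fin.reduceLT]
  ring

theorem permanent_fin_four (M : Matrix (Fin 4) (Fin 4) R) :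
    M.permanent =
      M 0 0 * (M 1 1 * (M 2 2 * M 3 3 + M 2 3 * M 3 2) + M 1 2 * (M 2 1 * M 3 3 + M 2 3 * M 3 1) +
        M 1 3 * (M 2 1 * M 3 2 + M 2 2 * M 3 1)) +
      M 0 1 * (M 1 0 * (M 2 2 * M 3 3 + M 2 3 * M 3 2) + M 1 2 * (M 2 0 * M 3 3 + M 2 3 * M 3 0) +
        M 1 3 * (M 2 0 * M 3 2 + M 2 2 * M 3 0)) +
      M 0 2 * (M 1 0 * (M 2 1 * M 3 3 + M 2 3 * M 3 1) + M 1 1 * (M 2 0 * M 3 3 + M 2 3 * M 3 0) +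
        M 1 3 * (M 2 0 * M 3 1 + M 2 1 * M 3 0)) +
      M 0 3 * (M 1 0 * (M 2 1 * M 3 2 + M 2 2 * M 3 1) + M 1 1 * (M 2 0 * M 3 2 + M 2 2 * M 3 0) +
        M 1 2 * (M 2 0 * M 3 1 + M 2 1 * M 3 0)) := by
  simp only [permanent_succ_column_zero, Nat.reduceAdd, Fin.isValue, Matrix.submatrix_apply,
    Fin.succAbove, Fin.succ_zero_eq_one, Matrix.submatrix_submatrix, Function.comp_apply,
    Fin.succ_one_eq_two, Matrix.permanent_unique, Fin.default_eq_zero, Fin.castSucc_zero,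
    Fin.reduceSucc, Fin.sum_univ_succ, lt_self_iff_false, ↓reduceIte, Fin.castSucc_one,
    Finset.univ_unique, Fin.castSucc_succ, Fin.succ_pos, Finset.sum_singleton, not_lt_zero,
    Fin.reduceCastSucc, Fin.reduceLT, Fin.lt_one_iff, Fin.reduceEq]
  ring

end Permanents

section DirectionSets

variable {F : Type*} [Field F]

/-- The set of slopes of the nonzero points on the graph of `f`. -/
def directionSet (f : F → F) : Set F := {y | ∃ x, x ≠ 0 ∧ f x / x = y}

variable [Fintype F] [DecidableEq F]

theorem cast_card_fiber_div_eq_neg_one (u : F →+ F) {y : F} (hy : y ∈ directionSet u) :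
    ((Finset.card {x : Fˣ | u x / x = y} : ℕ) : F) = -1 := by
  let K : AddSubgroup F := (u - AddMonoidHom.mulLeft y).ker
  have hmem (x : F) : x ∈ K ↔ u x = y * x := by
    simp [K, AddMonoidHom.mem_ker, sub_eq_zero]
  -- The order of `K` annihilates `K`, and `K` contains a nonzero element of the field `F`.
  have hcard : (Nat.card K : F) = 0 := by
    obtain ⟨x, hx0, hx⟩ := hy
    have hxK : x ∈ K := (hmem x).mpr ((div_eq_iff hx0).mp hx)
    have : Nat.card K • x = 0 := congrArg Subtype.val (card_nsmul_eq_zero' (x := (⟨x, hxK⟩ : K)))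
    exact (mul_eq_zero.mp (nsmul_eq_mul _ x ▸ this)).resolve_right hx0
  have hK : (K : Set F) =
      insert 0 ((Finset.univ.filter fun x : Fˣ ↦ u x / x = y).image Units.val : Finset F) := by
    ext x
    rcases eq_or_ne x 0 with rfl | hx
    · simp
    · lift x to Fˣ using hx.isUnit
      simp [hmem, div_eq_iff, Units.val_inj]
  have hK' : Nat.card K = Finset.card {x : Fˣ | u x / x = y} + 1 := by
    rw [← SetLike.coe_sort_coe, hK, Nat.card_coe_set_eq, Set.ncard_coe_finset,
      Finset.card_insert_of_notMem (by simp), Finset.card_image_of_injective _ Units.val_injective]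
  rw [hK', Nat.cast_succ] at hcard
  exact eq_neg_of_add_eq_zero_left hcard

theorem sum_units_apply_div (u : F →+ F) (w : F → F) :
    ∑ x : Fˣ, w (u x / x) = -∑ᶠ y ∈ directionSet u, w y := by
  have himage : ((Finset.univ.image fun x : Fˣ ↦ u x / x : Finset F) : Set F) = directionSet u := by
    ext y
    simpa [directionSet] using Units.exists_iff_ne_zero (p := fun x ↦ u x / x = y)
  rw [← himage, finsum_mem_coe_finset, Finset.sum_comp w, ← Finset.sum_neg_distrib]
  refine Finset.sum_congr rfl fun y hy ↦ ?_
  rw [nsmul_eq_mul, cast_card_fiber_div_eq_neg_one u (himage ▸ hy), neg_one_mul]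

theorem sum_units_apply_div_eq_of_directionSet_eq {u v : F →+ F}
    (h : directionSet u = directionSet v) (w : F → F) :
    ∑ x : Fˣ, w (u x / x) = ∑ x : Fˣ, w (v x / x) := by
  rw [sum_units_apply_div, sum_units_apply_div, h]

end DirectionSets

section HilbertNinety

theorem exists_pow_eq_of_pow_eq_one {G : Type*} [CommGroup G] [IsCyclic G] [Finite G] {k m : ℕ}
    (hG : Nat.card G = k * m) {x : G} (hx : x ^ m = 1) : ∃ y, y ^ k = x := by
  have hk : 0 < k := Nat.pos_of_mul_pos_right (hG ▸ Nat.card_pos)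
  have hle : (powMonoidHom k : G →* G).range ≤ (powMonoidHom m).ker := by
    rintro _ ⟨y, rfl⟩
    rw [MonoidHom.mem_ker, powMonoidHom_apply, powMonoidHom_apply, ← pow_mul, ← hG,
      pow_card_eq_one']
  have heq : (powMonoidHom k : G →* G).range = (powMonoidHom m).ker := by
    refine Subgroup.eq_of_le_of_card_ge hle ?_
    rw [IsCyclic.card_powMonoidHom_range, IsCyclic.card_powMonoidHom_ker, hG,
      Nat.gcd_mul_left_left, Nat.gcd_mul_right_left, Nat.mul_div_cancel_left _ hk]
  have hmem : x ∈ (powMonoidHom k : G →* G).range := heq ▸ hx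
  exact hmem

/-- The relative norm to the fixed field of `φ`, when `φ` has order `n`. -/
def frobNorm {F : Type*} [CommSemiring F] (φ : F →+* F) (n : ℕ) : F →* F :=
  ∏ i ∈ Finset.range n, ((φ ^ i : F →+* F) : F →* F)

theorem frobNorm_apply {F : Type*} [CommSemiring F] (φ : F →+* F) (n : ℕ) (x : F) :
    frobNorm φ n x = ∏ i ∈ Finset.range n, (φ ^ i) x := by
  simp [frobNorm]

variable {F : Type*} [Field F] {φ : F →+* F} {q n : ℕ}

theorem frobNorm_eq_zero_iff (hn : n ≠ 0) {x : F} : frobNorm φ n x = 0 ↔ x = 0 := by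
  simp only [frobNorm_apply, Finset.prod_eq_zero_iff, map_eq_zero]
  exact ⟨fun ⟨_, _, hx⟩ ↦ hx, fun hx ↦ ⟨0, Finset.mem_range.mpr hn.bot_lt, hx⟩⟩

variable [Fintype F]

theorem exists_apply_eq_mul_of_frobNorm_eq_one (hφ : ∀ x, φ x = x ^ q)
    (hF : Fintype.card F = q ^ n) {t : F} (ht : frobNorm φ n t = 1) :
    ∃ m, m ≠ 0 ∧ φ m = t * m := by
  have hq : 1 ≤ q := one_le_two.trans (two_le_of_card_eq_pow hF)
  simp only [frobNorm_apply, ringHom_pow_apply_eq_pow hφ, Finset.prod_pow_eq_pow_sum] at ht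
  have hcard : Nat.card Fˣ = (q - 1) * ∑ i ∈ Finset.range n, q ^ i := by
    rw [Nat.card_units, Nat.card_eq_fintype_card, hF, mul_comm, geom_sum_mul_of_one_le hq]
  have hsum : ∑ i ∈ Finset.range n, q ^ i ≠ 0 :=
    right_ne_zero_of_mul (hcard ▸ Nat.card_pos.ne')
  lift t to Fˣ using IsUnit.of_pow_eq_one ht hsum
  obtain ⟨m, rfl⟩ := exists_pow_eq_of_pow_eq_one hcard (x := t) (Units.ext ht)
  refine ⟨m, m.ne_zero, ?_⟩
  rw [hφ, Units.val_pow_eq_pow_val, pow_sub_one_mul (by omega)]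

theorem exists_mul_eq_mul_apply_of_frobNorm_eq (hφ : ∀ x, φ x = x ^ q)
    (hF : Fintype.card F = q ^ n) {a b : F} (h : frobNorm φ n b = frobNorm φ n a) :
    ∃ m, m ≠ 0 ∧ b * m = a * φ m := by
  have hn : n ≠ 0 := by
    rintro rfl
    exact Fintype.one_lt_card.ne' hF
  rcases eq_or_ne a 0 with rfl | ha
  · obtain rfl : b = 0 := by rwa [(frobNorm_eq_zero_iff hn).mpr rfl, frobNorm_eq_zero_iff hn] at h
    exact ⟨1, one_ne_zero, by rw [zero_mul, zero_mul]⟩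
  have hab : frobNorm φ n (b / a) * frobNorm φ n a = frobNorm φ n a := by
    rw [← map_mul, div_mul_cancel₀ _ ha, h]
  obtain ⟨m, hm0, hm⟩ := exists_apply_eq_mul_of_frobNorm_eq_one hφ hF
    ((mul_eq_right₀ ((frobNorm_eq_zero_iff hn).not.mpr ha)).mp hab)
  exact ⟨m, hm0, by rw [hm, ← mul_assoc, mul_div_cancel₀ _ ha]⟩

end HilbertNinety

section QPolynomials

variable {R : Type*} [CommRing R] {n : ℕ} {φ : R →+* R}

/-- The `q`-polynomial `∑ i, α i * x ^ q ^ i`, where `φ` plays the role of `x ↦ x ^ q`. -/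
def qPoly (φ : R →+* R) (α : Fin n → R) : R →+ R :=
  ∑ i, (AddMonoidHom.mulLeft (α i)).comp (φ ^ (i : ℕ)).toAddMonoidHom

theorem qPoly_apply (α : Fin n → R) (x : R) : qPoly φ α x = ∑ i, α i * (φ ^ (i : ℕ)) x := by
  simp [qPoly]

/-- The matrix of coefficients of the `q`-polynomials `φ ^ j ∘ qPoly φ α`, with cyclic indices. -/
def dicksonMatrix (φ : R →+* R) (α : Fin n → R) : Matrix (Fin n) (Fin n) R :=
  .of fun j i ↦ (φ ^ (j : ℕ)) (α (i - j))

/-- The coefficients of the adjoint `q`-polynomial. -/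
def adjointCoeff [NeZero n] (φ : R →+* R) (α : Fin n → R) (i : Fin n) : R :=
  (φ ^ (i : ℕ)) (α (-i))

/-- The principal permanents of the Dickson matrices of `α` and `β` agree. This is the only
consequence of the equality of direction sets that is needed. -/
def SamePrincipalPermanents (φ : R →+* R) (α β : Fin n → R) : Prop :=
  ∀ ⦃k : ℕ⦄ (r : Fin k → Fin n), Function.Injective r →
    ((dicksonMatrix φ α).submatrix r r).permanent = ((dicksonMatrix φ β).submatrix r r).permanent

variable [NeZero n]

theorem ringHom_pow_qPoly (h : φ ^ n = 1) (α : Fin n → R) (j : Fin n) (x : R) :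
    (φ ^ (j : ℕ)) (qPoly φ α x) = ∑ i, dicksonMatrix φ α j i * (φ ^ (i : ℕ)) x := by
  rw [← Equiv.sum_comp (Equiv.addRight j), qPoly_apply, map_sum]
  refine Finset.sum_congr rfl fun i _ ↦ ?_
  simp only [Equiv.coe_addRight, dicksonMatrix, Matrix.of_apply, add_sub_cancel_right,
    pow_val_add h, (Commute.pow_pow_self φ i j).eq, map_mul, RingHom.mul_def, RingHom.comp_apply]

theorem ringHom_pow_neg_apply_pow_apply (h : φ ^ n = 1) (i : Fin n) (x : R) :
    (φ ^ (i : ℕ)) ((φ ^ ((-i : Fin n) : ℕ)) x) = x := by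
  rw [← RingHom.comp_apply, ← RingHom.mul_def, ← pow_val_add h, add_neg_cancel, Fin.val_zero,
    pow_zero, RingHom.one_def, RingHom.id_apply]

theorem adjointCoeff_adjointCoeff (h : φ ^ n = 1) (α : Fin n → R) :
    adjointCoeff φ (adjointCoeff φ α) = α := by
  funext i
  rw [adjointCoeff, adjointCoeff, ringHom_pow_neg_apply_pow_apply h, neg_neg]

theorem dicksonMatrix_adjointCoeff (h : φ ^ n = 1) (α : Fin n → R) :
    dicksonMatrix φ (adjointCoeff φ α) = (dicksonMatrix φ α).transpose := by
  ext j i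
  rw [dicksonMatrix, dicksonMatrix, Matrix.transpose_apply, Matrix.of_apply, Matrix.of_apply,
    adjointCoeff, neg_sub, ← RingHom.comp_apply, ← RingHom.mul_def, ← pow_val_add h,
    add_sub_cancel]

theorem SamePrincipalPermanents.adjointCoeff_left (h : φ ^ n = 1) {α β : Fin n → R}
    (hs : SamePrincipalPermanents φ α β) : SamePrincipalPermanents φ (adjointCoeff φ α) β := by
  intro k r hr
  rw [dicksonMatrix_adjointCoeff h, ← Matrix.transpose_submatrix, Matrix.permanent_transpose]
  exact hs r hr

theorem SamePrincipalPermanents.adjointCoeff_right (h : φ ^ n = 1) {α β : Fin n → R}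
    (hs : SamePrincipalPermanents φ α β) : SamePrincipalPermanents φ α (adjointCoeff φ β) := by
  intro k r hr
  rw [dicksonMatrix_adjointCoeff h, ← Matrix.transpose_submatrix, Matrix.permanent_transpose]
  exact hs r hr

theorem SamePrincipalPermanents.apply_zero_eq {α β : Fin n → R}
    (hs : SamePrincipalPermanents φ α β) : β 0 = α 0 := by
  have h := hs ![0] (Function.injective_of_subsingleton _)
  rw [Matrix.permanent_unique, Matrix.permanent_unique] at h
  simpa [dicksonMatrix] using h.symm

theorem SamePrincipalPermanents.mul_adjointCoeff_eq {α β : Fin n → R}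
    (hs : SamePrincipalPermanents φ α β) (i : Fin n) :
    β i * adjointCoeff φ β i = α i * adjointCoeff φ α i := by
  rcases eq_or_ne i 0 with rfl | hi
  · simp [adjointCoeff, hs.apply_zero_eq]
  have h := hs ![0, i] (by simpa [Function.Injective, Fin.forall_fin_two] using ⟨hi.symm, hi⟩)
  rw [permanent_fin_two, permanent_fin_two] at h
  simpa [dicksonMatrix, adjointCoeff, hs.apply_zero_eq] using h.symm

end QPolynomials

section QPolynomialsOverFields

variable {F : Type*} [Field F] {n : ℕ} {φ : F →+* F}

/-- `α` and `β` have the same coefficients up to the substitution `x ↦ m * x` followed by division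
by `m`. -/
def IsScaled (φ : F →+* F) (α β : Fin n → F) : Prop :=
  ∃ m, m ≠ 0 ∧ ∀ i, β i * m = α i * (φ ^ (i : ℕ)) m

theorem IsScaled.exists_qPoly_apply_eq {α β : Fin n → F} (h : IsScaled φ α β) :
    ∃ m, m ≠ 0 ∧ ∀ x, qPoly φ β x = qPoly φ α (m * x) / m := by
  obtain ⟨m, hm, hβ⟩ := h
  refine ⟨m, hm, fun x ↦ ?_⟩
  simp only [eq_div_iff hm, qPoly_apply, Finset.sum_mul, map_mul]
  exact Finset.sum_congr rfl fun i _ ↦ by linear_combination (φ ^ (i : ℕ)) x * hβ i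

variable [NeZero n]

theorem IsScaled.adjointCoeff (h : φ ^ n = 1) {α β : Fin n → F} (hs : IsScaled φ α β) :
    IsScaled φ (adjointCoeff φ α) (adjointCoeff φ β) := by
  obtain ⟨m, hm, hβ⟩ := hs
  refine ⟨m⁻¹, inv_ne_zero hm, fun i ↦ ?_⟩
  have hi := congrArg (φ ^ (i : ℕ)) (hβ (-i))
  simp only [map_mul, ringHom_pow_neg_apply_pow_apply h] at hi
  have hφm : (φ ^ (i : ℕ)) m ≠ 0 := (map_ne_zero _).mpr hm
  rw [map_inv₀, ← div_eq_mul_inv, ← div_eq_mul_inv, div_eq_div_iff hm hφm]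
  exact hi

variable [Fintype F] {q : ℕ}

theorem sum_units_prod_ringHom_pow_qPoly_div [DecidableEq F] {ι : Type*} [Fintype ι]
    [DecidableEq ι] (hφ : ∀ x, φ x = x ^ q) (hF : Fintype.card F = q ^ n) (α : Fin n → F)
    {r : ι → Fin n} (hr : Function.Injective r) :
    ∑ x : Fˣ, ∏ j, (φ ^ (r j : ℕ)) (qPoly φ α x / x) =
      -((dicksonMatrix φ α).submatrix r r).permanent := by
  simp only [map_div₀, ringHom_pow_qPoly (ringHom_pow_eq_one hφ hF)]
  exact sum_units_prod_sum_mul_pow_div_pow hφ hF ((dicksonMatrix φ α).submatrix r id) hr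

theorem samePrincipalPermanents_of_directionSet_eq (hφ : ∀ x, φ x = x ^ q)
    (hF : Fintype.card F = q ^ n) {α β : Fin n → F}
    (h : directionSet (qPoly φ α) = directionSet (qPoly φ β)) :
    SamePrincipalPermanents φ α β := by
  classical
  intro k r hr
  have hsum := sum_units_apply_div_eq_of_directionSet_eq h fun y ↦ ∏ j, (φ ^ (r j : ℕ)) y
  rwa [sum_units_prod_ringHom_pow_qPoly_div hφ hF α hr,
    sum_units_prod_ringHom_pow_qPoly_div hφ hF β hr, neg_inj] at hsum

end QPolynomialsOverFields

theorem eq_and_eq_or_eq_and_eq_of_add_eq_of_mul_eq {R : Type*} [CommRing R] [NoZeroDivisors R]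
    {x y z w : R} (hadd : x + y = z + w) (hmul : x * y = z * w) :
    x = z ∧ y = w ∨ x = w ∧ y = z := by
  have h : (x - z) * (x - w) = 0 := by linear_combination x * hadd - hmul
  rcases mul_eq_zero.mp h with h | h
  · exact .inl ⟨sub_eq_zero.mp h, by linear_combination hadd - h⟩
  · exact .inr ⟨sub_eq_zero.mp h, by linear_combination hadd - h⟩

section FourDimensional

variable {R : Type*} [CommRing R] {φ : R →+* R} {α β : Fin 4 → R}

theorem dicksonMatrix_fin_four (φ : R →+* R) (α : Fin 4 → R) : dicksonMatrix φ α =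
    !![α 0, α 1, α 2, α 3;
      φ (α 3), φ (α 0), φ (α 1), φ (α 2);
      φ (φ (α 2)), φ (φ (α 3)), φ (φ (α 0)), φ (φ (α 1));
      φ (φ (φ (α 1))), φ (φ (φ (α 2))), φ (φ (φ (α 3))), φ (φ (φ (α 0)))] := by
  ext i j
  fin_cases i <;> fin_cases j <;> rfl

theorem adjointCoeff_fin_four (φ : R →+* R) (α : Fin 4 → R) :
    adjointCoeff φ α = ![α 0, φ (α 3), (φ ^ 2) (α 2), (φ ^ 3) (α 1)] := by
  funext i
  fin_cases i <;> rfl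

theorem adjointCoeff_one (φ : R →+* R) (α : Fin 4 → R) : adjointCoeff φ α 1 = φ (α 3) := rfl

theorem adjointCoeff_two (φ : R →+* R) (α : Fin 4 → R) : adjointCoeff φ α 2 = φ (φ (α 2)) := rfl

theorem frobNorm_four (φ : R →+* R) (x : R) :
    frobNorm φ 4 x = x * φ x * φ (φ x) * φ (φ (φ x)) := by
  simp [frobNorm_apply, Finset.prod_range_succ]

/-- An invariant of `α` under `IsScaled` which, unlike the entries `α i * adjointCoeff φ α i`, may
change when `α` is replaced by its adjoint. -/
def mixedInvariant (φ : R →+* R) (α : Fin 4 → R) : R := α 1 * φ (α 1) * φ (φ (α 2))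

/-- The quantities telling `α` from its adjoint. Over a field with `q ^ 4` elements, the principal
permanents together with these invariants of `α` and of its adjoint determine `α` up to
`IsScaled`. -/
def orientedInvariants (φ : R →+* R) (α : Fin 4 → R) : R × R :=
  (mixedInvariant φ α, frobNorm φ 4 (α 1))

variable (h4 : ∀ x, φ (φ (φ (φ x))) = x)
include h4

theorem permanent_dicksonMatrix_zero_one_two (α : Fin 4 → R) :
    ((dicksonMatrix φ α).submatrix ![0, 1, 2] ![0, 1, 2]).permanent =
      α 0 * φ (α 0) * φ (φ (α 0)) + α 1 * adjointCoeff φ α 1 * φ (φ (α 0)) +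
        φ (α 1 * adjointCoeff φ α 1) * α 0 + α 2 * adjointCoeff φ α 2 * φ (α 0) +
        mixedInvariant φ α + mixedInvariant φ (adjointCoeff φ α) := by
  rw [permanent_fin_three, dicksonMatrix_fin_four]
  simp only [Nat.succ_eq_add_one, Nat.reduceAdd, Fin.isValue, Matrix.submatrix_apply,
    Matrix.cons_val_zero, Matrix.of_apply, Matrix.cons_val', Matrix.cons_val_fin_one,
    Matrix.cons_val_one, Matrix.cons_val, adjointCoeff_one, map_mul, adjointCoeff_two,
    mixedInvariant, h4]
  ring

theorem permanent_dicksonMatrix_of_apply_two_eq_zero (hα : α 2 = 0) :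
    (dicksonMatrix φ α).permanent =
      frobNorm φ 4 (α 0) + α 1 * adjointCoeff φ α 1 * φ (φ (α 0)) * φ (φ (φ (α 0))) +
        φ (α 1 * adjointCoeff φ α 1) * φ (φ (φ (α 0))) * α 0 +
        φ (φ (α 1 * adjointCoeff φ α 1)) * α 0 * φ (α 0) +
        φ (φ (φ (α 1 * adjointCoeff φ α 1))) * φ (α 0) * φ (φ (α 0)) +
        α 1 * adjointCoeff φ α 1 * φ (φ (α 1 * adjointCoeff φ α 1)) +
        φ (α 1 * adjointCoeff φ α 1) * φ (φ (φ (α 1 * adjointCoeff φ α 1))) +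
        frobNorm φ 4 (α 1) + frobNorm φ 4 (adjointCoeff φ α 1) := by
  rw [permanent_fin_four, dicksonMatrix_fin_four]
  simp only [Fin.isValue, hα, map_zero, Matrix.of_apply, Matrix.cons_val', Matrix.cons_val_zero,
    Matrix.cons_val_fin_one, Matrix.cons_val_one, Matrix.cons_val, mul_zero, add_zero, zero_mul,
    zero_add, frobNorm_four, adjointCoeff_one, map_mul, h4]
  ring

theorem mixedInvariant_mul_adjointCoeff (α : Fin 4 → R) :
    mixedInvariant φ α * mixedInvariant φ (adjointCoeff φ α) =
      α 1 * adjointCoeff φ α 1 * φ (α 1 * adjointCoeff φ α 1) * (α 2 * adjointCoeff φ α 2) := by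
  simp only [mixedInvariant, adjointCoeff_one, adjointCoeff_two, map_mul, h4]
  ring

theorem mixedInvariant_mul_apply_apply (α : Fin 4 → R) :
    mixedInvariant φ α * φ (φ (mixedInvariant φ α)) =
      frobNorm φ 4 (α 1) * (α 2 * adjointCoeff φ α 2) := by
  simp only [mixedInvariant, adjointCoeff_two, frobNorm_four, map_mul, h4]
  ring

namespace SamePrincipalPermanents

variable (hs : SamePrincipalPermanents φ α β)
include hs

theorem mixedInvariant_add_eq : mixedInvariant φ β + mixedInvariant φ (adjointCoeff φ β) =
    mixedInvariant φ α + mixedInvariant φ (adjointCoeff φ α) := by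
  have h := hs ![0, 1, 2] (by decide)
  simp only [permanent_dicksonMatrix_zero_one_two h4, hs.apply_zero_eq,
    hs.mul_adjointCoeff_eq] at h
  linear_combination -h

theorem frobNorm_add_eq (hα : α 2 = 0) (hβ : β 2 = 0) :
    frobNorm φ 4 (β 1) + frobNorm φ 4 (adjointCoeff φ β 1) =
      frobNorm φ 4 (α 1) + frobNorm φ 4 (adjointCoeff φ α 1) := by
  have h := hs id Function.injective_id
  simp only [Matrix.submatrix_id_id, permanent_dicksonMatrix_of_apply_two_eq_zero h4 hα,
    permanent_dicksonMatrix_of_apply_two_eq_zero h4 hβ, hs.apply_zero_eq,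
    hs.mul_adjointCoeff_eq] at h
  linear_combination -h

end SamePrincipalPermanents

end FourDimensional

section FourDimensionalOverFields

variable {F : Type*} [Field F] {φ : F →+* F} {α β : Fin 4 → F}

namespace SamePrincipalPermanents

variable (h4 : ∀ x, φ (φ (φ (φ x))) = x) (hs : SamePrincipalPermanents φ α β)
include h4 hs

theorem orientedInvariants_eq_of_mixedInvariant_eq (hα : α 2 ≠ 0)
    (h : mixedInvariant φ β = mixedInvariant φ α) :
    orientedInvariants φ β = orientedInvariants φ α := by
  have hne : α 2 * adjointCoeff φ α 2 ≠ 0 := by simpa [adjointCoeff_two] using hα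
  refine Prod.ext h (mul_right_cancel₀ hne ?_)
  calc frobNorm φ 4 (β 1) * (α 2 * adjointCoeff φ α 2)
      = mixedInvariant φ β * φ (φ (mixedInvariant φ β)) := by
        rw [mixedInvariant_mul_apply_apply h4, hs.mul_adjointCoeff_eq]
    _ = frobNorm φ 4 (α 1) * (α 2 * adjointCoeff φ α 2) := by
        rw [h, mixedInvariant_mul_apply_apply h4]

theorem orientedInvariants_eq_or_of_apply_two_ne_zero (hα : α 2 ≠ 0) :
    orientedInvariants φ β = orientedInvariants φ α ∧
        orientedInvariants φ (adjointCoeff φ β) = orientedInvariants φ (adjointCoeff φ α) ∨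
      orientedInvariants φ β = orientedInvariants φ (adjointCoeff φ α) ∧
        orientedInvariants φ (adjointCoeff φ β) = orientedInvariants φ α := by
  have hφ4 : φ ^ 4 = 1 := RingHom.ext h4
  have hα' : adjointCoeff φ α 2 ≠ 0 := by simpa [adjointCoeff_two] using hα
  have hmul : mixedInvariant φ β * mixedInvariant φ (adjointCoeff φ β) =
      mixedInvariant φ α * mixedInvariant φ (adjointCoeff φ α) := by
    simp only [mixedInvariant_mul_adjointCoeff h4, hs.mul_adjointCoeff_eq]
  exact (eq_and_eq_or_eq_and_eq_of_add_eq_of_mul_eq (hs.mixedInvariant_add_eq h4) hmul).imp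
    (.imp (hs.orientedInvariants_eq_of_mixedInvariant_eq h4 hα)
      ((hs.adjointCoeff_left hφ4).adjointCoeff_right hφ4
        |>.orientedInvariants_eq_of_mixedInvariant_eq h4 hα'))
    (.imp ((hs.adjointCoeff_left hφ4).orientedInvariants_eq_of_mixedInvariant_eq h4 hα')
      ((hs.adjointCoeff_right hφ4).orientedInvariants_eq_of_mixedInvariant_eq h4 hα))

theorem orientedInvariants_eq_or :
    orientedInvariants φ β = orientedInvariants φ α ∧
        orientedInvariants φ (adjointCoeff φ β) = orientedInvariants φ (adjointCoeff φ α) ∨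
      orientedInvariants φ β = orientedInvariants φ (adjointCoeff φ α) ∧
        orientedInvariants φ (adjointCoeff φ β) = orientedInvariants φ α := by
  rcases ne_or_eq (α 2) 0 with hα | hα
  · exact hs.orientedInvariants_eq_or_of_apply_two_ne_zero h4 hα
  have hβ : β 2 = 0 := by simpa [adjointCoeff_two, hα] using hs.mul_adjointCoeff_eq 2
  have hmul : frobNorm φ 4 (β 1) * frobNorm φ 4 (adjointCoeff φ β 1) =
      frobNorm φ 4 (α 1) * frobNorm φ 4 (adjointCoeff φ α 1) := by
    rw [← map_mul, ← map_mul, hs.mul_adjointCoeff_eq]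
  simpa [orientedInvariants, mixedInvariant, adjointCoeff_two, hα, hβ] using
    eq_and_eq_or_eq_and_eq_of_add_eq_of_mul_eq (hs.frobNorm_add_eq h4 hα hβ) hmul

end SamePrincipalPermanents

section Finite

variable [Fintype F] {q : ℕ} (hφ : ∀ x, φ x = x ^ q) (hF : Fintype.card F = q ^ 4)
  (hs : SamePrincipalPermanents φ α β)
include hφ hF hs

theorem isScaled_of_orientedInvariants_eq_of_apply_one_ne_zero (hα : α 1 ≠ 0)
    (h : orientedInvariants φ β = orientedInvariants φ α) : IsScaled φ α β := by
  obtain ⟨hmixed, hnorm⟩ := Prod.ext_iff.mp h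
  obtain ⟨m, hm, h1⟩ := exists_mul_eq_mul_apply_of_frobNorm_eq hφ hF hnorm
  have h4 : ∀ x, φ (φ (φ (φ x))) = x := RingHom.congr_fun (ringHom_pow_eq_one hφ hF)
  have hφ1 : φ (β 1) * φ m = φ (α 1) * φ (φ m) := by rw [← map_mul, h1, map_mul]
  have hβ : β 1 ≠ 0 := left_ne_zero_of_mul (h1 ▸ mul_ne_zero hα ((map_ne_zero φ).mpr hm))
  have h2 : β 2 * m = α 2 * φ (φ m) := by
    have hφφ : φ (φ m) * φ (φ (β 2)) = φ (φ (α 2)) * m := by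
      simp only [orientedInvariants, mixedInvariant] at hmixed
      have hne : β 1 * φ (β 1) * φ m ≠ 0 := by simp [hβ, hm]
      refine mul_left_cancel₀ hne ?_
      linear_combination φ m * φ (φ m) * hmixed - φ (φ (α 2)) * φ m * φ (β 1) * h1 -
        φ (φ (α 2)) * φ m * α 1 * hφ1
    simpa [h4, mul_comm] using congrArg (fun x ↦ φ (φ x)) hφφ
  have h3 : β 3 * m = α 3 * φ (φ (φ m)) := by
    have hprod := hs.mul_adjointCoeff_eq 1
    rw [adjointCoeff_one, adjointCoeff_one] at hprod
    refine φ.injective (mul_left_cancel₀ hβ ?_)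
    rw [map_mul, map_mul, h4]
    linear_combination φ m * hprod - φ (α 3) * h1
  refine ⟨m, hm, fun i ↦ ?_⟩
  fin_cases i
  exacts [congrArg (· * m) hs.apply_zero_eq, h1, h2, h3]

theorem isScaled_of_apply_one_eq_zero_of_apply_three_eq_zero (hα1 : α 1 = 0) (hα3 : α 3 = 0)
    (hβ1 : β 1 = 0) (hβ3 : β 3 = 0) : IsScaled φ α β := by
  have hnorm : frobNorm (φ ^ 2) 2 (β 2) = frobNorm (φ ^ 2) 2 (α 2) := by
    simpa [frobNorm_apply, Finset.prod_range_succ, adjointCoeff_two] using hs.mul_adjointCoeff_eq 2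
  obtain ⟨m, hm, h2⟩ := exists_mul_eq_mul_apply_of_frobNorm_eq (φ := φ ^ 2)
    (ringHom_pow_apply_eq_pow hφ 2) (hF.trans (pow_mul q 2 2)) hnorm
  refine ⟨m, hm, fun i ↦ ?_⟩
  fin_cases i
  exacts [congrArg (· * m) hs.apply_zero_eq, by simp [hα1, hβ1], h2, by simp [hα3, hβ3]]

theorem isScaled_of_orientedInvariants_eq
    (h : orientedInvariants φ β = orientedInvariants φ α)
    (h' : orientedInvariants φ (adjointCoeff φ β) = orientedInvariants φ (adjointCoeff φ α)) :
    IsScaled φ α β := by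
  have hφ4 := ringHom_pow_eq_one hφ hF
  rcases ne_or_eq (α 1) 0 with hα1 | hα1
  · exact isScaled_of_orientedInvariants_eq_of_apply_one_ne_zero hφ hF hs hα1 h
  rcases ne_or_eq (α 3) 0 with hα3 | hα3
  · have hadj := isScaled_of_orientedInvariants_eq_of_apply_one_ne_zero hφ hF
      ((hs.adjointCoeff_left hφ4).adjointCoeff_right hφ4) ((map_ne_zero φ).mpr hα3) h'
    simpa only [adjointCoeff_adjointCoeff hφ4] using hadj.adjointCoeff hφ4
  have hzero {x : F} (hx : frobNorm φ 4 x = frobNorm φ 4 0) : x = 0 := by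
    rwa [(frobNorm_eq_zero_iff four_ne_zero).mpr rfl, frobNorm_eq_zero_iff four_ne_zero] at hx
  have hβ1 : β 1 = 0 := hzero (hα1 ▸ congrArg Prod.snd h)
  have hβ3 : φ (β 3) = 0 :=
    hzero (by simpa only [orientedInvariants, adjointCoeff_one, hα3, map_zero] using
      congrArg Prod.snd h')
  exact isScaled_of_apply_one_eq_zero_of_apply_three_eq_zero hφ hF hs hα1 hα3 hβ1
    ((map_eq_zero φ).mp hβ3)

theorem isScaled_or_isScaled_adjointCoeff :
    IsScaled φ α β ∨ IsScaled φ (adjointCoeff φ α) β := by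
  have hφ4 := ringHom_pow_eq_one hφ hF
  refine (hs.orientedInvariants_eq_or (RingHom.congr_fun hφ4)).imp (fun ⟨h, h'⟩ ↦ ?_)
    fun ⟨h, h'⟩ ↦ ?_
  · exact isScaled_of_orientedInvariants_eq hφ hF hs h h'
  · exact isScaled_of_orientedInvariants_eq hφ hF (hs.adjointCoeff_left hφ4) h
      (by rwa [adjointCoeff_adjointCoeff hφ4])

end Finite

end FourDimensionalOverFields

theorem stmt_8_general (q : ℕ) (F : Type*) [Field F] [Fintype F] (hF : Fintype.card F = q ^ 4)
    (a b : ℕ → F) (f g fhat : F → F)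
    (hf : ∀ x : F, f x = ∑ i ∈ Finset.range 4, a i * x ^ q ^ i)
    (hg : ∀ x : F, g x = ∑ i ∈ Finset.range 4, b i * x ^ q ^ i)
    (hfhat : ∀ x : F, fhat x =
      a 0 * x + (a 3) ^ q * x ^ q + (a 2) ^ q ^ 2 * x ^ q ^ 2 + (a 1) ^ q ^ 3 * x ^ q ^ 3)
    (hD : {y : F | ∃ x : F, x ≠ 0 ∧ f x / x = y} = {y : F | ∃ x : F, x ≠ 0 ∧ g x / x = y}) :
    ∃ l : F, l ≠ 0 ∧
      ((∀ x : F, g x = f (l * x) / l) ∨ (∀ x : F, g x = fhat (l * x) / l)) := by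
  obtain ⟨φ, hφ⟩ := exists_ringHom_eq_pow_of_card_eq_pow four_ne_zero hF
  let α : Fin 4 → F := fun i ↦ a i
  let β : Fin 4 → F := fun i ↦ b i
  have hfα : f = qPoly φ α := funext fun x ↦ by
    simp only [hf, qPoly_apply, ringHom_pow_apply_eq_pow hφ, Finset.sum_range, α]
  have hgβ : g = qPoly φ β := funext fun x ↦ by
    simp only [hg, qPoly_apply, ringHom_pow_apply_eq_pow hφ, Finset.sum_range, β]
  have hfhatα : fhat = qPoly φ (adjointCoeff φ α) := funext fun x ↦ by
    simp [hfhat, qPoly_apply, ringHom_pow_apply_eq_pow hφ, Fin.sum_univ_four,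
      adjointCoeff_fin_four, hφ, α]
  rw [hfα, hgβ] at hD
  have hs := samePrincipalPermanents_of_directionSet_eq hφ hF hD
  rw [hfα, hgβ, hfhatα]
  rcases isScaled_or_isScaled_adjointCoeff hφ hF hs with h | h
  · exact h.exists_qPoly_apply_eq.imp fun l hl ↦ hl.imp_right .inl
  · exact h.exists_qPoly_apply_eq.imp fun l hl ↦ hl.imp_right .inr

/-- if two q-polynomials `f, g` over `F_{q^4}` define the same linear set
and the maximum field of linearity of `f` is `F_q` (i.e. `a_1 ≠ 0` or `a_3 ≠ 0`), then
`g(x) = f(λx)/λ` or `g(x) = f̂(λx)/λ` for some nonzero `λ`, where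
`f̂(x) = a_0 x + a_3^q x^q + a_2^{q^2} x^{q^2} + a_1^{q^3} x^{q^3}` is the adjoint of `f`. -/
theorem stmt_8 (p e q : ℕ) (hp : p.Prime) (he : 0 < e) (hq : q = p ^ e)
    (F : Type) [Field F] [Fintype F] (hF : Fintype.card F = q ^ 4)
    (a b : ℕ → F) (f g fhat : F → F)
    (hf : ∀ x : F, f x = ∑ i ∈ Finset.range 4, a i * x ^ q ^ i)
    (hg : ∀ x : F, g x = ∑ i ∈ Finset.range 4, b i * x ^ q ^ i)
    (hfhat : ∀ x : F, fhat x =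
      a 0 * x + (a 3) ^ q * x ^ q + (a 2) ^ q ^ 2 * x ^ q ^ 2 + (a 1) ^ q ^ 3 * x ^ q ^ 3)
    (hD : {y : F | ∃ x : F, x ≠ 0 ∧ f x / x = y} = {y : F | ∃ x : F, x ≠ 0 ∧ g x / x = y})
    (hlin : a 1 ≠ 0 ∨ a 3 ≠ 0) :
    ∃ l : F, l ≠ 0 ∧
      ((∀ x : F, g x = f (l * x) / l) ∨ (∀ x : F, g x = fhat (l * x) / l)) :=
  stmt_8_general q F hF a b f g fhat hf hg hfhat hD
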